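/- For an odd prime p and integer n ≥ 3, the modular p-group M(p^n) = ⟨x,y | x^{p^{n-1}} = y^p = 1, y^{-1}xy = x^{1+p^{n-2}}⟩ has exactly one exact factorization up to equivalence, namely M(p^n) = ⟨x⟩ · ⟨y⟩ with ⟨x⟩ ≅ Z_{p^{n-1}} and ⟨y⟩ ≅ Z_p. -/

import Mathlib

/-- An exact factorization of a finite group `G` is a pair of nontrivial subgroups `(H, K)`
with `HK = G` and `H ∩ K = 1`. -/
def IsExactFactorization {G : Type*} [Group G] (p : Subgroup G × Subgroup G) : Prop :=
  p.1 ≠ ⊥ ∧ p.2 ≠ ⊥ ∧ p.1 ⊓ p.2 = ⊥ ∧ ∀ g : G, ∃ h ∈ p.1, ∃ k ∈ p.2, g = h * k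

/-- Two exact factorizations are equivalent if their factor pairs are isomorphic as
unordered pairs of groups. -/
def FactEquiv {G : Type*} [Group G]
    (p q : {p : Subgroup G × Subgroup G // IsExactFactorization p}) : Prop :=
  (Nonempty (p.1.1 ≃* q.1.1) ∧ Nonempty (p.1.2 ≃* q.1.2)) ∨
  (Nonempty (p.1.1 ≃* q.1.2) ∧ Nonempty (p.1.2 ≃* q.1.1))

/-- The number of exact factorizations of a group, counted up to equivalence. -/
noncomputable def f₂ (G : Type*) [Group G] : ℕ :=
  Nat.card (Quot (FactEquiv (G := G)))

/-!
Write `|G| = p ^ (n + 2)`. The element `x ^ p ^ n = ⁅x, y⁆` is central and its `p`-th power is `1`,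
so `G` has class at most two and
`(a * b) ^ p ^ n = a ^ p ^ n * b ^ p ^ n * ⁅b, a⁆ ^ (p ^ n).choose 2`.
Unless `p ^ n = 2`, that is `|G| = 8`, the prime `p` divides the binomial coefficient and the
`p ^ n`-th power map is an endomorphism of `G`. It does not kill `x`, so in a factorization `G = HK`
it is nontrivial on one of the factors. That factor then has an element of order `p ^ (n + 1)`,
which forces it to be cyclic of index `p`.
-/

open Subgroup
open scoped commutatorElement Pointwise

section ClassTwo

variable {G : Type*} [Group G]

theorem mem_center_of_closure_eq_top {S : Set G} (hS : closure S = ⊤) {z : G}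
    (hz : ∀ s ∈ S, Commute s z) : z ∈ center G := by
  rw [← centralizer_univ, ← coe_top, ← hS, centralizer_closure]
  exact hz

theorem commutator_le_of_closure_eq_top {S : Set G} (hS : closure S = ⊤) {N : Subgroup G}
    [N.Normal] (hN : ∀ s ∈ S, ∀ t ∈ S, ⁅s, t⁆ ∈ N) : commutator G ≤ N := by
  have hquot : closure (QuotientGroup.mk' N '' S) = ⊤ := by
    rw [← MonoidHom.map_closure, hS, ← MonoidHom.range_eq_map, QuotientGroup.range_mk']
  have hcomm : IsMulCommutative (closure (QuotientGroup.mk' N '' S)) := by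
    apply isMulCommutative_closure
    rintro _ ⟨s, hs, rfl⟩ _ ⟨t, ht, rfl⟩
    rw [← commutatorElement_eq_one_iff_mul_comm, ← map_commutatorElement]
    exact (QuotientGroup.eq_one_iff _).2 (hN s hs t ht)
  rwa [← Normal.quotient_commutative_iff_commutator_le, ← commutator_eq_bot_iff,
    _root_.commutator_def, commutator_self_eq_bot_iff, ← hquot]

theorem commutator_le_zpowers_commutatorElement {x y : G} (hgen : closure {x, y} = ⊤)
    (hxy : ⁅x, y⁆ ∈ center G) : commutator G ≤ zpowers ⁅x, y⁆ := by
  have : (zpowers ⁅x, y⁆).Normal := commutator_top_right_le_iff.1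
    ((commutator_top_right_eq_bot_iff_le_center.2 (zpowers_le.2 hxy)).trans_le bot_le)
  refine commutator_le_of_closure_eq_top hgen ?_
  rintro s (rfl | rfl) t (rfl | rfl)
  · simp only [commutatorElement_self, one_mem]
  · exact mem_zpowers _
  · exact commutatorElement_inv t s ▸ inv_mem (mem_zpowers _)
  · simp only [commutatorElement_self, one_mem]

theorem pow_mul_of_commutatorElement_mem_center {a b : G} (h : ⁅b, a⁆ ∈ center G) (m : ℕ) :
    b ^ m * a = a * b ^ m * ⁅b, a⁆ ^ m := by
  have hcomm (g : G) : Commute g ⁅b, a⁆ := mem_center_iff.1 h g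
  have hsemi : SemiconjBy a (b * ⁅b, a⁆) b := by
    rw [SemiconjBy, (hcomm b).eq, ← mul_assoc, (hcomm a).eq, commutatorElement_def]
    group
  rw [mul_assoc, ← (hcomm b).mul_pow]
  exact (hsemi.pow_right m).eq.symm

theorem mul_pow_of_commutatorElement_mem_center {a b : G} (h : ⁅b, a⁆ ∈ center G) (m : ℕ) :
    (a * b) ^ m = a ^ m * b ^ m * ⁅b, a⁆ ^ m.choose 2 := by
  have hcomm (k : ℕ) (g : G) : Commute (⁅b, a⁆ ^ k) g :=
    (show Commute ⁅b, a⁆ g from (mem_center_iff.1 h g).symm).pow_left k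
  induction m with
  | zero => simp
  | succ m ih =>
    calc (a * b) ^ (m + 1)
        = a ^ m * (b ^ m * a) * b * ⁅b, a⁆ ^ m.choose 2 := by
          rw [pow_succ, ih, mul_assoc, (hcomm _ _).eq]; simp only [mul_assoc]
      _ = a ^ m * a * b ^ m * (⁅b, a⁆ ^ m * b) * ⁅b, a⁆ ^ m.choose 2 := by
          rw [pow_mul_of_commutatorElement_mem_center h]; simp only [mul_assoc]
      _ = a ^ (m + 1) * b ^ (m + 1) * ⁅b, a⁆ ^ (m + 1).choose 2 := by
          rw [(hcomm m b).eq, Nat.choose_succ_succ' m 1, Nat.choose_one_right, pow_add ⁅b, a⁆,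
            pow_succ a, pow_succ b]
          simp only [mul_assoc]

theorem mul_pow_of_closure_pair_eq_top {x y : G} (hgen : closure {x, y} = ⊤)
    (hxy : ⁅x, y⁆ ∈ center G) {m : ℕ} (hm : ⁅x, y⁆ ^ m.choose 2 = 1) (a b : G) :
    (a * b) ^ m = a ^ m * b ^ m := by
  have hba : ⁅b, a⁆ ∈ zpowers ⁅x, y⁆ :=
    commutator_le_zpowers_commutatorElement hgen hxy
      (commutator_mem_commutator (mem_top b) (mem_top a))
  obtain ⟨k, hk⟩ := mem_zpowers_iff.1 hba
  have hpow : ⁅b, a⁆ ^ m.choose 2 = 1 := by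
    rw [← hk, ← zpow_natCast, zpow_comm, zpow_natCast, hm, one_zpow]
  rw [mul_pow_of_commutatorElement_mem_center (zpowers_le.2 hxy hba), hpow, mul_one]

end ClassTwo

section ConjugateToPower

variable {G : Type*} [Group G] {x y : G} {m : ℕ}

theorem commute_pow_of_semiconjBy_pow (h : SemiconjBy y (x ^ (1 + m)) x) {k : ℕ}
    (hk : x ^ (m * k) = 1) : Commute y (x ^ k) := by
  have hxk : (x ^ (1 + m)) ^ k = x ^ k := by
    rw [← pow_mul, add_mul, one_mul, pow_add, hk, mul_one]
  exact hxk ▸ h.pow_right k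

theorem commutatorElement_eq_pow_of_semiconjBy_pow (h : SemiconjBy y (x ^ (1 + m)) x)
    (hm : x ^ (m * m) = 1) : ⁅x, y⁆ = x ^ m := by
  rw [commutatorElement_def, mul_inv_eq_iff_eq_mul, mul_inv_eq_iff_eq_mul, ← h.eq,
    ← (commute_pow_of_semiconjBy_pow h hm).eq, mul_assoc, ← pow_succ, add_comm]

theorem commutatorElement_mem_center_of_semiconjBy_pow (hgen : closure {x, y} = ⊤)
    (h : SemiconjBy y (x ^ (1 + m)) x) (hm : x ^ (m * m) = 1) : ⁅x, y⁆ ∈ center G := by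
  rw [commutatorElement_eq_pow_of_semiconjBy_pow h hm]
  apply mem_center_of_closure_eq_top hgen
  rintro s (rfl | rfl)
  · exact Commute.self_pow _ _
  · exact commute_pow_of_semiconjBy_pow h hm

theorem normal_zpowers_of_semiconjBy_pow (hgen : closure {x, y} = ⊤)
    (h : SemiconjBy y (x ^ (1 + m)) x) (hm : x ^ (m * m) = 1) : (zpowers x).Normal := by
  apply Normal.of_commutator_le
  calc commutator G ≤ zpowers ⁅x, y⁆ := commutator_le_zpowers_commutatorElement hgen
        (commutatorElement_mem_center_of_semiconjBy_pow hgen h hm)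
    _ ≤ zpowers x := by
        rw [commutatorElement_eq_pow_of_semiconjBy_pow h hm, zpowers_le]
        exact npow_mem_zpowers x m

theorem mul_pow_of_semiconjBy_pow (hgen : closure {x, y} = ⊤)
    (h : SemiconjBy y (x ^ (1 + m)) x) (hm : x ^ (m * m) = 1)
    (hchoose : x ^ (m * m.choose 2) = 1) (a b : G) : (a * b) ^ m = a ^ m * b ^ m := by
  apply mul_pow_of_closure_pair_eq_top hgen
    (commutatorElement_mem_center_of_semiconjBy_pow hgen h hm)
  rw [commutatorElement_eq_pow_of_semiconjBy_pow h hm, ← pow_mul, hchoose]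

end ConjugateToPower

section Complement

variable {G : Type*} [Group G]

theorem isComplement'_of_mul_eq_univ_of_card_le [Finite G] {H K : Subgroup G}
    (hmul : (H : Set G) * (K : Set G) = Set.univ) (hcard : Nat.card H * Nat.card K ≤ Nat.card G) :
    IsComplement' H K := by
  have hsurj : Function.Surjective fun q : H × K ↦ (q.1 : G) * q.2 := by
    intro g
    obtain ⟨h, hh, k, hk, hg⟩ := Set.eq_univ_iff_forall.1 hmul g
    exact ⟨(⟨h, hh⟩, ⟨k, hk⟩), hg⟩
  exact hsurj.bijective_of_nat_card_le (by rwa [Nat.card_prod])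

theorem zpowers_mul_zpowers_eq_univ {x y : G} (hgen : closure {x, y} = ⊤)
    [(zpowers x).Normal] : (zpowers x : Set G) * (zpowers y : Set G) = Set.univ := by
  rw [← normal_mul, zpowers_eq_closure, zpowers_eq_closure, ← Subgroup.closure_union,
    Set.singleton_union, hgen, coe_top]

theorem isComplement'_zpowers_of_pow_eq_one [Finite G] {x y : G} {a b : ℕ}
    (hcard : Nat.card G = a * b) (hx : x ^ a = 1) (hy : y ^ b = 1)
    (hmul : (zpowers x : Set G) * (zpowers y : Set G) = Set.univ) :
    IsComplement' (zpowers x) (zpowers y) ∧ orderOf x = a ∧ orderOf y = b := by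
  have hpos : 0 < a * b := hcard ▸ Nat.card_pos
  have hxa : orderOf x ≤ a := orderOf_le_of_pow_eq_one (Nat.pos_of_mul_pos_right hpos) hx
  have hyb : orderOf y ≤ b := orderOf_le_of_pow_eq_one (Nat.pos_of_mul_pos_left hpos) hy
  have hcompl : IsComplement' (zpowers x) (zpowers y) := by
    apply isComplement'_of_mul_eq_univ_of_card_le hmul
    rw [Nat.card_zpowers, Nat.card_zpowers, hcard]
    exact Nat.mul_le_mul hxa hyb
  have horders : orderOf x * orderOf y = a * b := by
    rw [← hcard, ← hcompl.card_mul_card, Nat.card_zpowers, Nat.card_zpowers]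
  exact ⟨hcompl, (mul_eq_mul_iff_eq_and_eq_of_pos hxa hyb (orderOf_pos x)
    (Nat.pos_of_mul_pos_left hpos)).1 horders⟩

theorem isExactFactorization_iff {q : Subgroup G × Subgroup G} :
    IsExactFactorization q ↔ q.1 ≠ ⊥ ∧ q.2 ≠ ⊥ ∧ IsComplement' q.1 q.2 := by
  refine and_congr_right' (and_congr_right' ⟨fun ⟨hinf, hmul⟩ ↦ ?_, fun h ↦ ⟨?_, fun g ↦ ?_⟩⟩)
  · refine isComplement'_of_disjoint_and_mul_eq_univ (disjoint_iff.2 hinf) ?_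
    refine Set.eq_univ_of_forall fun g ↦ ?_
    obtain ⟨h, hh, k, hk, rfl⟩ := hmul g
    exact Set.mul_mem_mul hh hk
  · exact h.disjoint.eq_bot
  · obtain ⟨⟨h, k⟩, hg⟩ := h.surjective g
    exact ⟨h, h.2, k, k.2, hg.symm⟩

theorem isExactFactorization_zpowers [Finite G] {x y : G} {a b : ℕ} (ha : 1 < a) (hb : 1 < b)
    (hcard : Nat.card G = a * b) (hx : x ^ a = 1) (hy : y ^ b = 1)
    (hmul : (zpowers x : Set G) * (zpowers y : Set G) = Set.univ) :
    IsExactFactorization (zpowers x, zpowers y) ∧ orderOf x = a := by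
  obtain ⟨hcompl, rfl, rfl⟩ := isComplement'_zpowers_of_pow_eq_one hcard hx hy hmul
  have hne {z : G} (hz : 1 < orderOf z) : zpowers z ≠ ⊥ :=
    fun h ↦ hz.ne' (orderOf_eq_one_iff.2 (zpowers_eq_bot.1 h))
  exact ⟨isExactFactorization_iff.2 ⟨hne ha, hne hb, hcompl⟩, rfl⟩

end Complement

section PrimePower

variable {G : Type*} [Group G] {p n : ℕ} [Fact p.Prime]

theorem nonempty_mulEquiv_zmod_of_isComplement' (hcard : Nat.card G = p ^ (n + 2))
    {H K : Subgroup G} (hHK : IsComplement' H K) (hK : K ≠ ⊥) {a : G} (ha : a ∈ H)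
    (hne : a ^ p ^ n ≠ 1) :
    Nonempty (H ≃* Multiplicative (ZMod (p ^ (n + 1)))) ∧
      Nonempty (K ≃* Multiplicative (ZMod p)) := by
  have hp : p.Prime := Fact.out
  have hmul : Nat.card H * Nat.card K = p ^ (n + 1) * p := by
    rw [hHK.card_mul_card, hcard, pow_succ]
  have hpK : p ∣ Nat.card K := by
    have : Finite G := Nat.finite_of_card_ne_zero (hcard ▸ pow_ne_zero _ hp.ne_zero)
    exact ((IsPGroup.of_card hcard).to_subgroup K).card_eq_or_dvd.resolve_left
      (mt card_eq_one.1 hK)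
  have hH : Nat.card H ∣ p ^ (n + 1) := by
    apply Nat.dvd_of_mul_dvd_mul_right hp.pos
    exact hmul ▸ Nat.mul_dvd_mul_left _ hpK
  have hord : orderOf a = p ^ (n + 1) :=
    orderOf_eq_prime_pow hne (orderOf_dvd_iff_pow_eq_one.1 ((H.orderOf_dvd_natCard ha).trans hH))
  have hcardH : Nat.card H = p ^ (n + 1) :=
    Nat.dvd_antisymm hH (hord ▸ H.orderOf_dvd_natCard ha)
  have hcardK : Nat.card K = p :=
    Nat.eq_of_mul_eq_mul_left (pow_pos hp.pos (n + 1)) (hcardH ▸ hmul)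
  have : Finite H := Nat.finite_of_card_ne_zero (hcardH ▸ pow_ne_zero _ hp.ne_zero)
  have hcycH : IsCyclic H :=
    isCyclic_of_orderOf_eq_card ⟨a, ha⟩ (by rw [orderOf_mk, hord, hcardH])
  have hcycK : IsCyclic K := isCyclic_of_prime_card hcardK
  exact ⟨⟨mulEquivOfCyclicCardEq (by simpa using hcardH)⟩,
    ⟨mulEquivOfCyclicCardEq (by simpa using hcardK)⟩⟩

theorem IsExactFactorization.nonempty_mulEquiv_zmod (hcard : Nat.card G = p ^ (n + 2))
    (hmul : ∀ a b : G, (a * b) ^ p ^ n = a ^ p ^ n * b ^ p ^ n) {g : G} (hg : g ^ p ^ n ≠ 1)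
    {q : Subgroup G × Subgroup G} (hq : IsExactFactorization q) :
    (Nonempty (q.1 ≃* Multiplicative (ZMod (p ^ (n + 1)))) ∧
      Nonempty (q.2 ≃* Multiplicative (ZMod p))) ∨
    (Nonempty (q.2 ≃* Multiplicative (ZMod (p ^ (n + 1)))) ∧
      Nonempty (q.1 ≃* Multiplicative (ZMod p))) := by
  obtain ⟨hH, hK, hcompl⟩ := isExactFactorization_iff.1 hq
  obtain ⟨h, hh, k, hk, rfl⟩ := hq.2.2.2 g
  by_cases hne : h ^ p ^ n = 1
  · have hne' : k ^ p ^ n ≠ 1 := by rwa [hmul, hne, one_mul] at hg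
    exact .inr (nonempty_mulEquiv_zmod_of_isComplement' hcard hcompl.symm hH hk hne')
  · exact .inl (nonempty_mulEquiv_zmod_of_isComplement' hcard hcompl hK hh hne)

theorem f₂_eq_one_of_mul_pow (hcard : Nat.card G = p ^ (n + 2))
    (hmul : ∀ a b : G, (a * b) ^ p ^ n = a ^ p ^ n * b ^ p ^ n) {g : G} (hg : g ^ p ^ n ≠ 1)
    {q : Subgroup G × Subgroup G} (hq : IsExactFactorization q) : f₂ G = 1 := by
  rw [f₂, Nat.card_eq_one_iff_unique]
  refine ⟨⟨?_⟩, ⟨Quot.mk _ ⟨q, hq⟩⟩⟩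
  rintro ⟨r, hr⟩ ⟨s, hs⟩
  apply Quot.sound
  rcases hr.nonempty_mulEquiv_zmod hcard hmul hg with ⟨⟨e₁⟩, ⟨e₂⟩⟩ | ⟨⟨e₂⟩, ⟨e₁⟩⟩ <;>
  rcases hs.nonempty_mulEquiv_zmod hcard hmul hg with ⟨⟨d₁⟩, ⟨d₂⟩⟩ | ⟨⟨d₂⟩, ⟨d₁⟩⟩
  · exact .inl ⟨⟨e₁.trans d₁.symm⟩, ⟨e₂.trans d₂.symm⟩⟩
  · exact .inr ⟨⟨e₁.trans d₂.symm⟩, ⟨e₂.trans d₁.symm⟩⟩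
  · exact .inr ⟨⟨e₁.trans d₂.symm⟩, ⟨e₂.trans d₁.symm⟩⟩
  · exact .inl ⟨⟨e₁.trans d₁.symm⟩, ⟨e₂.trans d₂.symm⟩⟩

end PrimePower

theorem modular_p_group_f₂_general (p n : ℕ) (hp : p.Prime) (hn : 3 ≤ n) (hpn : p ^ n ≠ 8)
    (G : Type*) [Group G] (x y : G) (hcard : Nat.card G = p ^ n)
    (hx : x ^ (p ^ (n - 1)) = 1) (hy : y ^ p = 1)
    (hconj : y⁻¹ * x * y = x ^ (1 + p ^ (n - 2)))
    (hgen : closure {x, y} = ⊤) :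
    f₂ G = 1 ∧
    closure {x} ⊓ closure {y} = ⊥ ∧
    (∀ g : G, ∃ h ∈ closure {x}, ∃ k ∈ closure {y}, g = h * k) ∧
    Nonempty (closure {x} ≃* Multiplicative (ZMod (p ^ (n - 1)))) ∧
    Nonempty (closure {y} ≃* Multiplicative (ZMod p)) := by
  obtain ⟨k, rfl⟩ : ∃ k, n = k + 2 := ⟨n - 2, by lia⟩
  simp only [Nat.add_sub_cancel, show k + 2 - 1 = k + 1 from rfl] at hx hconj ⊢
  have : Fact p.Prime := ⟨hp⟩
  have : Finite G := Nat.finite_of_card_ne_zero (hcard ▸ pow_ne_zero _ hp.ne_zero)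
  have hp2 : p ^ k ≠ 2 := fun h ↦ by
    obtain ⟨rfl, rfl⟩ := Nat.prime_two.pow_eq_iff.1 h
    exact hpn rfl
  have hpow {j : ℕ} (hj : p ∣ j) : x ^ (p ^ k * j) = 1 :=
    orderOf_dvd_iff_pow_eq_one.1
      ((orderOf_dvd_of_pow_eq_one hx).trans (pow_succ p k ▸ mul_dvd_mul_left _ hj))
  have hsq : x ^ (p ^ k * p ^ k) = 1 := hpow (dvd_pow_self p (by lia))
  have hsemi : SemiconjBy y (x ^ (1 + p ^ k)) x := by rw [SemiconjBy, ← hconj]; group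
  have hmul := mul_pow_of_semiconjBy_pow hgen hsemi hsq
    (hpow (hp.dvd_choose_pow two_ne_zero hp2.symm))
  have := normal_zpowers_of_semiconjBy_pow hgen hsemi hsq
  obtain ⟨hfact, hord⟩ := isExactFactorization_zpowers (Nat.one_lt_pow k.succ_ne_zero hp.one_lt)
    hp.one_lt (hcard.trans (pow_succ p (k + 1))) hx hy (zpowers_mul_zpowers_eq_univ hgen)
  have hxk : x ^ p ^ k ≠ 1 := by
    apply pow_ne_one_of_lt_orderOf (pow_ne_zero k hp.ne_zero)
    exact hord ▸ Nat.pow_lt_pow_succ hp.one_lt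
  rw [← zpowers_eq_closure, ← zpowers_eq_closure]
  exact ⟨f₂_eq_one_of_mul_pow hcard hmul hxk hfact, hfact.2.2.1, hfact.2.2.2,
    nonempty_mulEquiv_zmod_of_isComplement' hcard (isExactFactorization_iff.1 hfact).2.2 hfact.2.1
      (mem_zpowers x) hxk⟩

/-- For an odd prime `p` and `n ≥ 3`, the modular `p`-group
`M(p^n) = ⟨x, y | x^{p^{n-1}} = y^p = 1, y⁻¹xy = x^{1+p^{n-2}}⟩` has exactly one exact
factorization up to equivalence, namely `M(p^n) = ⟨x⟩ · ⟨y⟩` with `⟨x⟩ ≅ Z_{p^{n-1}}` and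
`⟨y⟩ ≅ Z_p`. -/
theorem modular_p_group_f₂ (p n : ℕ) (hp : p.Prime) (hodd : Odd p) (hn : 3 ≤ n)
    (G : Type*) [Group G] (x y : G) (hcard : Nat.card G = p ^ n)
    (hx : x ^ (p ^ (n - 1)) = 1) (hy : y ^ p = 1)
    (hconj : y⁻¹ * x * y = x ^ (1 + p ^ (n - 2)))
    (hgen : Subgroup.closure {x, y} = ⊤) :
    f₂ G = 1 ∧
    Subgroup.closure {x} ⊓ Subgroup.closure {y} = ⊥ ∧
    (∀ g : G, ∃ h ∈ Subgroup.closure {x}, ∃ k ∈ Subgroup.closure {y}, g = h * k) ∧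
    Nonempty (Subgroup.closure {x} ≃* Multiplicative (ZMod (p ^ (n - 1)))) ∧
    Nonempty (Subgroup.closure {y} ≃* Multiplicative (ZMod p)) := by
  refine modular_p_group_f₂_general p n hp hn (fun h ↦ ?_) G x y hcard hx hy hconj hgen
  exact absurd (h ▸ hodd.pow : Odd 8) (by decide)
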